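/- In 𝒢(V): (i) every point is incident with at least one line; (ii) for every incident point-line pair (P₁,L₁) there is a point P₂ incident with L₁ not neighboring P₁; (iii) for every triple (P₁,L₁,P₂) with P₁,P₂ non-neighboring points incident with L₁, there is a line L₂ through P₂ not neighboring L₁; (iv) for every quadruple (P₁,L₁,P₂,L₂) with P₁,P₂ non-neighboring points on L₁ and L₁,L₂ non-neighboring lines through P₂, there is a point P₃ incident with L₂ such that (P₁,P₂,P₃) is a proper ordered triangle; (v) every proper ordered triangle (P₁,P₂,P₃) extends to a proper ordered quadrangle (P₁,P₂,P₃,P₄). -/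

import Mathlib

/-! Context: `K` a field, `V` a commutative, associative, unital 2-dimensional `K`-algebra in
which every element is a product of two elements; `V₀ = K·r ∪ K·s` is the set of non-units.
Points and lines of the geometry `𝒢(V)` are represented by triples in `V × V × V` with
trivial annihilator, up to multiplication by a unit. -/

/-- The triple `p` has trivial annihilator (so `V*p` is a point/line of `𝒢(V)`). -/
def TrivAnn {V : Type} [CommRing V] (p : V × V × V) : Prop :=
  ∀ v : V, v * p.1 = 0 → v * p.2.1 = 0 → v * p.2.2 = 0 → v = 0

/-- The point (represented by) `p` is incident with the line (represented by) `L`. -/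
def Incid {V : Type} [CommRing V] (p L : V × V × V) : Prop :=
  L.1 * p.1 + L.2.1 * p.2.1 + L.2.2 * p.2.2 = 0

/-- Two points (or two lines) are neighboring. -/
def Nbr {V : Type} [CommRing V] (p q : V × V × V) : Prop :=
  ∃ k l : V, (k, l) ≠ ((0 : V), (0 : V)) ∧
    (k * p.1, k * p.2.1, k * p.2.2) = (l * q.1, l * q.2.1, l * q.2.2)

/-- The point `p` and the line `L` are neighboring. -/
def NbrPL {V : Type} [CommRing V] (p L : V × V × V) : Prop :=
  ¬ IsUnit (L.1 * p.1 + L.2.1 * p.2.1 + L.2.2 * p.2.2)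

/-- `p` and `q` represent the same point (resp. line) of `𝒢(V)`. -/
def SameCls {V : Type} [CommRing V] (p q : V × V × V) : Prop :=
  ∃ u : V, IsUnit u ∧ (u * p.1, u * p.2.1, u * p.2.2) = q

/-- The standing hypotheses on the algebra `V` over `K`: it is `2`-dimensional, every element
is a product of two elements, and the set of non-units is `K·r ∪ K·s`. -/
def GoodAlg (K : Type) [Field K] (V : Type) [CommRing V] [Algebra K V] (r s : V) : Prop :=
  Module.finrank K V = 2 ∧ (∀ v : V, ∃ a b : V, v = a * b) ∧
    (∀ v : V, ¬ IsUnit v ↔ ((∃ k : K, v = k • r) ∨ (∃ k : K, v = k • s)))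

/-- A proper ordered triangle: three pairwise non-neighboring points such that the three
(unique) joining lines are pairwise non-neighboring. -/
def ProperTri {V : Type} [CommRing V] (P₁ P₂ P₃ : V × V × V) : Prop :=
  ¬ Nbr P₁ P₂ ∧ ¬ Nbr P₂ P₃ ∧ ¬ Nbr P₃ P₁ ∧
  ∃ L₁₂ L₂₃ L₃₁ : V × V × V,
    TrivAnn L₁₂ ∧ TrivAnn L₂₃ ∧ TrivAnn L₃₁ ∧
    Incid P₁ L₁₂ ∧ Incid P₂ L₁₂ ∧ Incid P₂ L₂₃ ∧ Incid P₃ L₂₃ ∧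
    Incid P₃ L₃₁ ∧ Incid P₁ L₃₁ ∧
    ¬ Nbr L₁₂ L₂₃ ∧ ¬ Nbr L₂₃ L₃₁ ∧ ¬ Nbr L₃₁ L₁₂

/-- A proper ordered quadrangle: every ordered subtriple is a proper ordered triangle. -/
def ProperQuad {V : Type} [CommRing V] (P₁ P₂ P₃ P₄ : V × V × V) : Prop :=
  ∀ i j k : Fin 4, i ≠ j → i ≠ k → j ≠ k →
    ProperTri (![P₁, P₂, P₃, P₄] i) (![P₁, P₂, P₃, P₄] j) (![P₁, P₂, P₃, P₄] k)

/-- Dot product of triples. -/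
def dot3 {V : Type} [CommRing V] (p q : V × V × V) : V :=
  p.1 * q.1 + p.2.1 * q.2.1 + p.2.2 * q.2.2

/-- Cross product of triples. -/
def cross3 {V : Type} [CommRing V] (p q : V × V × V) : V × V × V :=
  (p.2.1 * q.2.2 - p.2.2 * q.2.1, p.2.2 * q.1 - p.1 * q.2.2, p.1 * q.2.1 - p.2.1 * q.1)

/-- Determinant of three triples. -/
def det3 {V : Type} [CommRing V] (p q r : V × V × V) : V := dot3 p (cross3 q r)

/-- `d` is not a zero divisor. -/
def Reg3 {V : Type} [CommRing V] (d : V) : Prop := ∀ v : V, v * d = 0 → v = 0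

section helpers
variable {V : Type} [CommRing V]

theorem not_nbr_of_cross (p q : V × V × V) (h : TrivAnn (cross3 p q)) : ¬ Nbr p q := by
  obtain ⟨p1, p2, p3⟩ := p
  obtain ⟨q1, q2, q3⟩ := q
  rintro ⟨k, l, hne, he⟩
  simp only [Prod.mk.injEq] at he
  simp only [TrivAnn, cross3] at h
  obtain ⟨h1, h2, h3⟩ := he
  apply hne
  have hk : k = 0 := by
    apply h
    · linear_combination q3 * h2 - q2 * h3
    · linear_combination q1 * h3 - q3 * h1
    · linear_combination q2 * h1 - q1 * h2
  have hl : l = 0 := by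
    apply h
    · linear_combination p3 * h2 - p2 * h3
    · linear_combination p1 * h3 - p3 * h1
    · linear_combination p2 * h1 - p1 * h2
  rw [hk, hl]

theorem cross_of_not_nbr (p q : V × V × V) (h : ¬ Nbr p q) : TrivAnn (cross3 p q) := by
  obtain ⟨p1, p2, p3⟩ := p
  obtain ⟨q1, q2, q3⟩ := q
  intro v h1 h2 h3
  simp only [cross3] at h1 h2 h3
  by_contra hv
  apply h
  by_cases a1 : v * p1 = 0
  · by_cases a2 : v * p2 = 0
    · by_cases a3 : v * p3 = 0
      · exact ⟨v, 0, by simp [hv], by simp [a1, a2, a3]⟩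
      · refine ⟨v * q3, v * p3, by simp [a3], ?_⟩
        simp only [Prod.mk.injEq]
        refine ⟨?_, ?_, ?_⟩
        · linear_combination - h2
        · linear_combination h1
        · ring
    · refine ⟨v * q2, v * p2, by simp [a2], ?_⟩
      simp only [Prod.mk.injEq]
      refine ⟨?_, ?_, ?_⟩
      · linear_combination h3
      · ring
      · linear_combination - h1
  · refine ⟨v * q1, v * p1, by simp [a1], ?_⟩
    simp only [Prod.mk.injEq]
    refine ⟨?_, ?_, ?_⟩
    · ring
    · linear_combination - h3
    · linear_combination h2

theorem properTri_of_det (p q r : V × V × V) (h : Reg3 (det3 p q r)) : ProperTri p q r := by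
  obtain ⟨p1, p2, p3⟩ := p
  obtain ⟨q1, q2, q3⟩ := q
  obtain ⟨r1, r2, r3⟩ := r
  simp only [Reg3, det3, dot3, cross3] at h
  have c1 : TrivAnn (cross3 (p1, p2, p3) (q1, q2, q3)) := by
    intro v h1 h2 h3
    simp only [cross3] at h1 h2 h3
    apply h
    linear_combination r1 * h1 + r2 * h2 + r3 * h3
  have c2 : TrivAnn (cross3 (q1, q2, q3) (r1, r2, r3)) := by
    intro v h1 h2 h3
    simp only [cross3] at h1 h2 h3
    apply h
    linear_combination p1 * h1 + p2 * h2 + p3 * h3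
  have c3 : TrivAnn (cross3 (r1, r2, r3) (p1, p2, p3)) := by
    intro v h1 h2 h3
    simp only [cross3] at h1 h2 h3
    apply h
    linear_combination q1 * h1 + q2 * h2 + q3 * h3
  refine ⟨not_nbr_of_cross _ _ c1, not_nbr_of_cross _ _ c2, not_nbr_of_cross _ _ c3,
    _, _, _, c1, c2, c3, ?_, ?_, ?_, ?_, ?_, ?_, ?_, ?_, ?_⟩
  iterate 6 (simp only [Incid, cross3]; ring)
  · apply not_nbr_of_cross
    intro v h1 h2 h3
    simp only [cross3] at h1 h2 h3
    apply h; apply h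
    linear_combination (r2 * p3 - r3 * p2) * h1 + (r3 * p1 - r1 * p3) * h2 +
      (r1 * p2 - r2 * p1) * h3
  · apply not_nbr_of_cross
    intro v h1 h2 h3
    simp only [cross3] at h1 h2 h3
    apply h; apply h
    linear_combination (p2 * q3 - p3 * q2) * h1 + (p3 * q1 - p1 * q3) * h2 +
      (p1 * q2 - p2 * q1) * h3
  · apply not_nbr_of_cross
    intro v h1 h2 h3
    simp only [cross3] at h1 h2 h3
    apply h; apply h
    linear_combination (q2 * r3 - q3 * r2) * h1 + (q3 * r1 - q1 * r3) * h2 +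
      (q1 * r2 - q2 * r1) * h3

/-- Every triple with trivial annihilator is unimodular. -/
def Unimod (V : Type) [CommRing V] : Prop :=
  ∀ p : V × V × V, TrivAnn p → ∃ m : V × V × V, dot3 m p = 1

/-- A line through two non-neighboring points is a multiple of the cross product. -/
theorem line_eq (hU : Unimod V) (p q L : V × V × V) (h : ¬ Nbr p q)
    (hp : Incid p L) (hq : Incid q L) : ∃ a : V, L.1 = a * (cross3 p q).1 ∧
      L.2.1 = a * (cross3 p q).2.1 ∧ L.2.2 = a * (cross3 p q).2.2 := by
  obtain ⟨n, hn⟩ := hU _ (cross_of_not_nbr p q h)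
  refine ⟨dot3 n L, ?_⟩
  obtain ⟨p1, p2, p3⟩ := p
  obtain ⟨q1, q2, q3⟩ := q
  obtain ⟨n1, n2, n3⟩ := n
  obtain ⟨l1, l2, l3⟩ := L
  simp only [Incid, dot3, cross3] at *
  -- the three components of `(p × q) × L = 0`
  have e1 : (p3 * q1 - p1 * q3) * l3 - (p1 * q2 - p2 * q1) * l2 = 0 := by
    linear_combination q1 * hp - p1 * hq
  have e2 : (p1 * q2 - p2 * q1) * l1 - (p2 * q3 - p3 * q2) * l3 = 0 := by
    linear_combination q2 * hp - p2 * hq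
  have e3 : (p2 * q3 - p3 * q2) * l2 - (p3 * q1 - p1 * q3) * l1 = 0 := by
    linear_combination q3 * hp - p3 * hq
  refine ⟨?_, ?_, ?_⟩
  · linear_combination (-l1) * hn + n3 * e2 - n2 * e3
  · linear_combination (-l2) * hn + n1 * e3 - n3 * e1
  · linear_combination (-l3) * hn + n2 * e1 - n1 * e2

theorem det_of_properTri (hU : Unimod V) (p q r : V × V × V) (h : ProperTri p q r) :
    Reg3 (det3 p q r) := by
  obtain ⟨n1, n2, -, L, M, -, -, -, -, i1, i2, i3, i4, -, -, hN, -, -⟩ := h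
  obtain ⟨a, a1, a2, a3⟩ := line_eq hU p q L n1 i1 i2
  obtain ⟨b, b1, b2, b3⟩ := line_eq hU q r M n2 i3 i4
  have hc := cross_of_not_nbr _ _ hN
  intro v hv
  obtain ⟨p1, p2, p3⟩ := p
  obtain ⟨q1, q2, q3⟩ := q
  obtain ⟨r1, r2, r3⟩ := r
  apply hc
  all_goals
    simp only [cross3, det3, dot3, a1, a2, a3, b1, b2, b3] at *
  · linear_combination a * b * q1 * hv
  · linear_combination a * b * q2 * hv
  · linear_combination a * b * q3 * hv

/-- Extending a flag: a second element on `L`, with cross product equal to `L`. -/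
theorem extend_flag (hU : Unimod V) (p L : V × V × V) (hp : TrivAnn p) (h : Incid p L) :
    ∃ q : V × V × V, Incid q L ∧ cross3 p q = L := by
  obtain ⟨m, hm⟩ := hU p hp
  refine ⟨cross3 L m, ?_, ?_⟩
  · simp only [Incid, cross3]; ring
  · obtain ⟨p1, p2, p3⟩ := p
    obtain ⟨m1, m2, m3⟩ := m
    obtain ⟨l1, l2, l3⟩ := L
    simp only [Incid, dot3, cross3, Prod.mk.injEq] at *
    refine ⟨?_, ?_, ?_⟩
    · linear_combination l1 * hm - m1 * h
    · linear_combination l2 * hm - m2 * h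
    · linear_combination l3 * hm - m3 * h

theorem trivAnn_right (p q : V × V × V) (h : TrivAnn (cross3 p q)) : TrivAnn q := by
  intro v h1 h2 h3
  apply h <;> simp only [cross3]
  · linear_combination p.2.1 * h3 - p.2.2 * h2
  · linear_combination p.2.2 * h1 - p.1 * h3
  · linear_combination p.1 * h2 - p.2.1 * h1

theorem incid_comm3 (p q : V × V × V) (h : Incid p q) : Incid q p := by
  simp only [Incid] at *
  linear_combination h

end helpers

/-- Two elements of a 2-dimensional algebra are either dependent or have `1` in their span. -/
theorem dep_or_one (K : Type) [Field K] (V : Type) [CommRing V] [Algebra K V]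
    (h2 : Module.finrank K V = 2) (x y : V) :
    (∃ a b : K, (a ≠ 0 ∨ b ≠ 0) ∧ a • x + b • y = 0) ∨ (∃ a b : K, a • x + b • y = 1) := by
  by_cases hli : LinearIndependent K ![x, y]
  · right
    have ht := hli.span_eq_top_of_card_eq_finrank (by simp [h2])
    have h1 : (1 : V) ∈ Submodule.span K (Set.range ![x, y]) := by rw [ht]; trivial
    rw [Matrix.range_cons, Matrix.range_cons, Matrix.range_empty, Set.union_empty,
      Set.singleton_union, Submodule.mem_span_pair] at h1
    exact h1
  · left
    rw [LinearIndependent.pair_iff] at hli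
    push Not at hli
    obtain ⟨a, b, h, h'⟩ := hli
    refine ⟨a, b, ?_, h⟩
    by_cases ha : a = 0
    · exact Or.inr (h' ha)
    · exact Or.inl ha

theorem unimod_of_finrank (K : Type) [Field K] (V : Type) [CommRing V] [Algebra K V]
    (h2 : Module.finrank K V = 2) : Unimod V := by
  rintro ⟨x, y, z⟩ hp
  haveI : FiniteDimensional K V := Module.finite_of_finrank_pos (by omega)
  set I : Ideal V := Ideal.span {x, y, z} with hI
  have hx : x ∈ I := Ideal.subset_span (by simp)
  have hy : y ∈ I := Ideal.subset_span (by simp)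
  have hz : z ∈ I := Ideal.subset_span (by simp)
  have key : (1 : V) ∈ I := by
    by_contra hone
    have hdep : ∀ t ∈ I, t ≠ 0 → ∀ u ∈ I, ∃ k : K, u = k • t := by
      intro t ht ht0 u hu
      rcases dep_or_one K V h2 t u with ⟨a, b, hab, h⟩ | ⟨a, b, h⟩
      · have hb : b ≠ 0 := by
          rintro rfl
          rw [zero_smul, add_zero] at h
          rcases smul_eq_zero.1 h with h | h
          · simp [h] at hab
          · exact ht0 h
        refine ⟨-(b⁻¹ * a), ?_⟩
        have h' : b • u = -(a • t) := by linear_combination h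
        calc u = b⁻¹ • (b • u) := by rw [smul_smul, inv_mul_cancel₀ hb, one_smul]
          _ = _ := by rw [h', smul_neg, smul_smul, neg_smul]
      · exfalso
        apply hone
        rw [← h]
        exact add_mem (Submodule.smul_of_tower_mem I a ht) (Submodule.smul_of_tower_mem I b hu)
    by_cases hall : ∀ t ∈ I, t = 0
    · apply hone
      have : (1 : V) = 0 := hp 1 (by simpa using hall x hx) (by simpa using hall y hy)
        (by simpa using hall z hz)
      rw [this]; exact I.zero_mem
    · push Not at hall
      obtain ⟨t, ht, ht0⟩ := hall
      have hk : ∀ v : V, v * t = 0 → ∀ u ∈ I, v * u = 0 := by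
        intro v hv u hu
        obtain ⟨k, rfl⟩ := hdep t ht ht0 u hu
        rw [mul_smul_comm, hv, smul_zero]
      have hinj : Function.Injective (LinearMap.mulRight K t) := by
        rw [injective_iff_map_eq_zero]
        intro v hv
        have hv' : v * t = 0 := hv
        exact hp v (hk v hv' x hx) (hk v hv' y hy) (hk v hv' z hz)
      obtain ⟨w, hw⟩ := LinearMap.injective_iff_surjective.1 hinj 1
      apply hone
      have hw' : w * t = 1 := hw
      rw [← hw']
      exact I.mul_mem_left w ht
  rw [hI, Ideal.mem_span_insert] at key
  obtain ⟨a, w, hw, h1⟩ := key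
  obtain ⟨b, c, hbc⟩ := Ideal.mem_span_pair.1 hw
  refine ⟨(a, b, c), ?_⟩
  simp only [dot3]
  linear_combination hbc - h1

theorem exists_line (K : Type) [Field K] (V : Type) [CommRing V] [Algebra K V]
    (h2 : Module.finrank K V = 2) (p : V × V × V) : ∃ L : V × V × V, TrivAnn L ∧ Incid p L := by
  obtain ⟨x, y, z⟩ := p
  rcases dep_or_one K V h2 x y with ⟨a, b, hab, h⟩ | ⟨a, b, h⟩
  · refine ⟨(algebraMap K V a, algebraMap K V b, 0), ?_, ?_⟩
    · intro v h1 h3 _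
      simp only at h1 h3
      rw [mul_comm, ← Algebra.smul_def] at h1 h3
      rcases hab with ha | hb
      · exact (smul_eq_zero.1 h1).resolve_left ha
      · exact (smul_eq_zero.1 h3).resolve_left hb
    · rw [Algebra.smul_def, Algebra.smul_def] at h
      simp only [Incid]
      linear_combination h
  · refine ⟨(y, -x, 0), ?_, ?_⟩
    · intro v h1 h3 _
      simp only at h1 h3
      rw [Algebra.smul_def, Algebra.smul_def] at h
      linear_combination (-v) * h - algebraMap K V a * h3 + algebraMap K V b * h1
    · simp only [Incid]; ring

theorem properQuad_of_det {V : Type} [CommRing V] (P₁ P₂ P₃ : V × V × V)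
    (h : Reg3 (det3 P₁ P₂ P₃)) : ProperQuad P₁ P₂ P₃ (P₁ + P₂ + P₃) := by
  obtain ⟨p1, p2, p3⟩ := P₁
  obtain ⟨q1, q2, q3⟩ := P₂
  obtain ⟨r1, r2, r3⟩ := P₃
  simp only [Reg3, det3, dot3, cross3] at h
  intro i j k hij hik hjk
  apply properTri_of_det
  intro v hv
  apply h
  fin_cases i <;> fin_cases j <;> first | exact absurd rfl hij | skip
  all_goals fin_cases k <;> first | exact absurd rfl hik | exact absurd rfl hjk | skip
  all_goals
    simp [det3, dot3, cross3] at hv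
    first
      | linear_combination hv
      | linear_combination -hv

/-- In `𝒢(V)`: (i) every point lies on a line; (ii) every flag `(P₁,L₁)`
extends by a point `P₂` of `L₁` not neighboring `P₁`; (iii) every such triple extends by a
line `L₂` through `P₂` not neighboring `L₁`; (iv) every such quadruple extends by a point
`P₃` on `L₂` with `(P₁,P₂,P₃)` a proper ordered triangle; (v) every proper ordered triangle
extends to a proper ordered quadrangle. -/
theorem stmt13 (K : Type) [Field K] (V : Type) [CommRing V] [Algebra K V] (r s : V)
    (hV : GoodAlg K V r s) :
    (∀ P₁ : V × V × V, TrivAnn P₁ → ∃ L₁ : V × V × V, TrivAnn L₁ ∧ Incid P₁ L₁) ∧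
    (∀ P₁ L₁ : V × V × V, TrivAnn P₁ → TrivAnn L₁ → Incid P₁ L₁ →
      ∃ P₂ : V × V × V, TrivAnn P₂ ∧ Incid P₂ L₁ ∧ ¬ Nbr P₁ P₂) ∧
    (∀ P₁ L₁ P₂ : V × V × V, TrivAnn P₁ → TrivAnn L₁ → TrivAnn P₂ →
      Incid P₁ L₁ → Incid P₂ L₁ → ¬ Nbr P₁ P₂ →
      ∃ L₂ : V × V × V, TrivAnn L₂ ∧ Incid P₂ L₂ ∧ ¬ Nbr L₁ L₂) ∧
    (∀ P₁ L₁ P₂ L₂ : V × V × V, TrivAnn P₁ → TrivAnn L₁ → TrivAnn P₂ → TrivAnn L₂ →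
      Incid P₁ L₁ → Incid P₂ L₁ → ¬ Nbr P₁ P₂ → Incid P₂ L₂ → ¬ Nbr L₁ L₂ →
      ∃ P₃ : V × V × V, TrivAnn P₃ ∧ Incid P₃ L₂ ∧ ProperTri P₁ P₂ P₃) ∧
    (∀ P₁ P₂ P₃ : V × V × V, TrivAnn P₁ → TrivAnn P₂ → TrivAnn P₃ →
      ProperTri P₁ P₂ P₃ →
      ∃ P₄ : V × V × V, TrivAnn P₄ ∧ ProperQuad P₁ P₂ P₃ P₄) := by
  have h2 := hV.1
  have hU := unimod_of_finrank K V h2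
  refine ⟨fun P _ => exists_line K V h2 P, ?_, ?_, ?_, ?_⟩
  · intro P L hP hL hPL
    obtain ⟨Q, hQ, hc⟩ := extend_flag hU P L hP hPL
    have hc' : TrivAnn (cross3 P Q) := by rw [hc]; exact hL
    exact ⟨Q, trivAnn_right _ _ hc', hQ, not_nbr_of_cross _ _ hc'⟩
  · intro _ L P _ hL hP _ hPL _
    obtain ⟨M, hM, hc⟩ := extend_flag hU L P hL (incid_comm3 _ _ hPL)
    have hc' : TrivAnn (cross3 L M) := by rw [hc]; exact hP
    exact ⟨M, trivAnn_right _ _ hc', incid_comm3 _ _ hM, not_nbr_of_cross _ _ hc'⟩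
  · intro P L Q M _ _ hQ hM iPL iQL hPQ iQM hLM
    obtain ⟨R, hR, hc⟩ := extend_flag hU Q M hQ iQM
    have hc' : TrivAnn (cross3 Q R) := by rw [hc]; exact hM
    refine ⟨R, trivAnn_right _ _ hc', hR, properTri_of_det _ _ _ ?_⟩
    obtain ⟨a, a1, a2, a3⟩ := line_eq hU P Q L hPQ iPL iQL
    have hX := cross_of_not_nbr _ _ hLM
    intro v hv
    rw [det3, hc] at hv
    obtain ⟨p1, p2, p3⟩ := P
    obtain ⟨q1, q2, q3⟩ := Q
    obtain ⟨m1, m2, m3⟩ := M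
    apply hX
    all_goals
      simp only [cross3, dot3, Incid, a1, a2, a3] at hv iQM ⊢
    · linear_combination a * q1 * hv - a * v * p1 * iQM
    · linear_combination a * q2 * hv - a * v * p2 * iQM
    · linear_combination a * q3 * hv - a * v * p3 * iQM
  · intro P Q R _ _ _ hT
    have hd := det_of_properTri hU P Q R hT
    have hq := properQuad_of_det P Q R hd
    refine ⟨P + Q + R, ?_, hq⟩
    have h3 : ProperTri P Q (P + Q + R) := hq 0 1 3 (by decide) (by decide) (by decide)
    exact trivAnn_right _ _ (cross_of_not_nbr _ _ h3.2.1)
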